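/- A set Λ' ⊆ Σ is a blur shift space with resolution V (that is, Λ' = Σ_Λ for some shift space Λ ⊆ A^ℕ) if and only if there exists a shift space Λ ⊆ A^ℕ such that Λ' is the closure of Λ in Σ with respect to the topology generated by the generalized cylinders. -/

import Mathlib

open Set Filter Topology

namespace BlurPaper

/-- The extended alphabet `Ā = A ⊕ V`, where each blurred set `H ∈ V` is regarded
as a new symbol `H̃`. -/
abbrev Symb (A : Type*) (V : Set (Set A)) := A ⊕ {H : Set A // H ∈ V}

/-- `V` is a family of blurred sets: every member is infinite and two distinct members
have finite intersection. -/
def IsBlurFamily {A : Type*} (V : Set (Set A)) : Prop :=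
  (∀ H ∈ V, H.Infinite) ∧ ∀ G ∈ V, ∀ H ∈ V, G ≠ H → (G ∩ H).Finite

/-- The full blur shift `Σ`: sequences over `Ā` such that a blur symbol is followed
by the same blur symbol. -/
def FullBlur (A : Type*) (V : Set (Set A)) : Set (ℕ → Symb A V) :=
  {x | ∀ (i : ℕ) (H : {H : Set A // H ∈ V}), x i = Sum.inr H → x (i + 1) = Sum.inr H}

/-- Generalized cylinder `Z(α)`. -/
def Z (A : Type*) (V : Set (Set A)) (α : List A) : Set (FullBlur A V) :=
  {x | ∀ i : Fin α.length, x.1 i = Sum.inl (α.get i)}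

/-- Generalized cylinder `Z(α, H, F)`. -/
def ZH (A : Type*) (V : Set (Set A)) (α : List A) (H : {H : Set A // H ∈ V})
    (F : Set A) : Set (FullBlur A V) :=
  {x | (∀ i : Fin α.length, x.1 i = Sum.inl (α.get i)) ∧
    (x.1 α.length = Sum.inr H ∨ ∃ a ∈ H.1 \ F, x.1 α.length = Sum.inl a)}

/-- The collection of all generalized cylinders. -/
def Cylinders (A : Type*) (V : Set (Set A)) : Set (Set (FullBlur A V)) :=
  {U | ∃ α : List A, U = Z A V α} ∪
  {U | ∃ (α : List A) (H : {H : Set A // H ∈ V}) (F : Set A),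
    F ⊆ H.1 ∧ F.Finite ∧ U = ZH A V α H F}

/-- The topology on the full blur shift generated by the generalized cylinders. -/
def tau (A : Type*) (V : Set (Set A)) : TopologicalSpace (FullBlur A V) :=
  TopologicalSpace.generateFrom (Cylinders A V)

/-- The shift map on the full blur shift. -/
def shift (A : Type*) (V : Set (Set A)) : FullBlur A V → FullBlur A V :=
  fun x => ⟨fun i => x.1 (i + 1), fun i H h => x.2 (i + 1) H h⟩

/-- The shift map on `A^ℕ`. -/
def shiftSeq (A : Type*) : (ℕ → A) → ℕ → A := fun x i => x (i + 1)

/-- The prodiscrete topology on `A^ℕ` (product of discrete topologies). -/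
def prodDiscrete (A : Type*) : TopologicalSpace (ℕ → A) :=
  @Pi.topologicalSpace ℕ (fun _ => A) fun _ => ⊥

/-- A (classical) shift space over `A`: closed in the prodiscrete topology and
invariant under the shift map. -/
def IsShiftSpace {A : Type*} (Λ : Set (ℕ → A)) : Prop :=
  @IsClosed _ (prodDiscrete A) Λ ∧ ∀ x ∈ Λ, shiftSeq A x ∈ Λ

/-- `w ∈ B(Y)`: the finite word `w` appears as an initial word of some element of `Y`. -/
def InLang {A : Type*} (Y : Set (ℕ → A)) (w : List A) : Prop :=
  ∃ x ∈ Y, ∀ i : Fin w.length, x i = w.get i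

/-- The follower set `F_Y(w) = {a : w a ∈ B(Y)}`. -/
def Fol {A : Type*} (Y : Set (ℕ → A)) (w : List A) : Set A :=
  {a | InLang Y (w ++ [a])}

/-- The predecessor set `P_Y(a) = {b : b a ∈ B(Y)}`. -/
def Pred {A : Type*} (Y : Set (ℕ → A)) (a : A) : Set A :=
  {b | InLang Y [b, a]}

/-- `B₁(Y)`: the set of letters occurring in sequences of `Y`. -/
def letters {A : Type*} (Y : Set (ℕ → A)) : Set A :=
  {a | ∃ x ∈ Y, ∃ i, x i = a}

/-- The canonical embedding `A^ℕ → Σ`. -/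
def embed (A : Type*) (V : Set (Set A)) : (ℕ → A) → FullBlur A V :=
  fun x => ⟨fun i => Sum.inl (x i), fun _ _ h => absurd h (by simp)⟩

/-- The point `(a₀ … a_{n-1} H̃ H̃ H̃ …)` of the full blur shift. -/
def wordBlur {A : Type*} {V : Set (Set A)} (α : List A) (H : {H : Set A // H ∈ V}) :
    FullBlur A V :=
  ⟨fun i => if h : i < α.length then Sum.inl (α.get ⟨i, h⟩) else Sum.inr H, by
    intro i K hK
    by_cases h : i < α.length
    · simp only [dif_pos h] at hK
      exact absurd hK (by simp)
    · simp only [dif_neg h] at hK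
      simp only [dif_neg (by omega : ¬ i + 1 < α.length)]
      exact hK⟩

/-- The boundary `∂Y`: points `(a₀ … a_{n-1} H̃ H̃ …)` with `a₀ … a_{n-1} ∈ B(Y)` and
`F_Y(a₀ … a_{n-1}) ∩ H` infinite. -/
def boundary (A : Type*) (V : Set (Set A)) (Y : Set (ℕ → A)) : Set (FullBlur A V) :=
  {z | ∃ (α : List A) (H : {H : Set A // H ∈ V}),
    z = wordBlur α H ∧ InLang Y α ∧ (Fol Y α ∩ H.1).Infinite}

/-- The blur shift space `Σ_Y = Y ∪ ∂Y` of `Y` with resolution `V`. -/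
def SigmaOf (A : Type*) (V : Set (Set A)) (Y : Set (ℕ → A)) : Set (FullBlur A V) :=
  embed A V '' Y ∪ boundary A V Y

/-- The subspace topology inherited from the full blur shift. -/
def subTau (A : Type*) (V : Set (Set A)) (X : Set (FullBlur A V)) :
    TopologicalSpace X :=
  TopologicalSpace.induced Subtype.val (tau A V)

/-- `V_Λ`: the blurred sets that appear in `Σ_Λ`, i.e. those meeting `B₁(Λ)` in an
infinite set. -/
def VLam (A : Type*) (V : Set (Set A)) (Λ : Set (ℕ → A)) : Set (Set A) :=
  {H | H ∈ V ∧ (letters Λ ∩ H).Infinite}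

/-!
Every point of the full blur shift is either the image of a sequence in `A^ℕ` or of the form
`(a₀ … a_{n-1} H̃ H̃ …)`, so it suffices to find which points of each kind lie in the closure of
`Λ`. The embedding `A^ℕ → Σ` induces the prodiscrete topology, so among sequences the closure in `Σ`
is the closure in `A^ℕ`. The sets `Z(α, H, F)` with `F` finite form a neighbourhood basis of
`α H̃ H̃ …`, and `Z(α, H, F)` meets `Λ` exactly when some letter of `H ∖ F` follows `α` in `Λ`; this
happens for every finite `F` if and only if `F_Λ(α) ∩ H` is infinite.
-/

section Words

variable {A : Type*} {V : Set (Set A)} {α β : List A} {a : A} {H G : {H : Set A // H ∈ V}}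
  {F F' : Set A} {x : ℕ → A} {z : FullBlur A V}

theorem mem_Z_iff : z ∈ Z A V α ↔ ∀ i (hi : i < α.length), z.1 i = Sum.inl α[i] :=
  Fin.forall_iff

theorem Z_subset_Z (h : β <+: α) : Z A V α ⊆ Z A V β := by
  intro z hz
  rw [mem_Z_iff] at hz ⊢
  intro i hi
  rw [hz i (hi.trans_le h.length_le), h.getElem hi]

theorem mem_Z_append_singleton :
    z ∈ Z A V (α ++ [a]) ↔ z ∈ Z A V α ∧ z.1 α.length = Sum.inl a := by
  refine ⟨fun hz => ⟨Z_subset_Z (List.prefix_append α [a]) hz, ?_⟩, fun ⟨hα, ha⟩ => ?_⟩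
  · simpa using mem_Z_iff.1 hz α.length (by simp)
  · rw [mem_Z_iff] at hα ⊢
    intro i hi
    obtain hlt | rfl : i < α.length ∨ i = α.length := by grind
    · rw [hα i hlt, List.getElem_append_left hlt]
    · rw [ha, List.getElem_concat_length rfl]

theorem embed_mem_Z_iff : embed A V x ∈ Z A V α ↔ ∀ i : Fin α.length, x i = α.get i :=
  forall_congr' fun _ => Sum.inl_injective.eq_iff

theorem apply_eq_inr_of_le {m n : ℕ} (hm : z.1 m = Sum.inr H) (hmn : m ≤ n) :
    z.1 n = Sum.inr H :=
  Nat.le_induction hm (fun k _ hk => z.2 k H hk) n hmn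

theorem eq_wordBlur_iff : z = wordBlur α H ↔ z ∈ Z A V α ∧ z.1 α.length = Sum.inr H := by
  refine ⟨?_, fun ⟨hα, hH⟩ => Subtype.ext (funext fun i => ?_)⟩
  · rintro rfl
    exact ⟨fun i => dif_pos i.2, dif_neg (lt_irrefl _)⟩
  · by_cases hi : i < α.length
    · simp only [wordBlur, dif_pos hi, mem_Z_iff.1 hα i hi, List.get_eq_getElem]
    · simp only [wordBlur, dif_neg hi, apply_eq_inr_of_le hH (not_lt.1 hi)]

theorem wordBlur_mem_Z_iff : wordBlur α H ∈ Z A V β ↔ β <+: α := by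
  have hα : wordBlur α H ∈ Z A V α := (eq_wordBlur_iff.1 rfl).1
  refine ⟨fun hβ => ?_, fun h => Z_subset_Z h hα⟩
  rw [mem_Z_iff] at hα hβ
  have hlen : β.length ≤ α.length := by
    by_contra! hlt
    exact Sum.inl_ne_inr ((hβ _ hlt).symm.trans (eq_wordBlur_iff.1 rfl).2)
  exact List.prefix_iff_getElem.2 ⟨hlen, fun i hi =>
    Sum.inl_injective ((hβ i hi).symm.trans (hα i (hi.trans_le hlen)))⟩

theorem wordBlur_inj : wordBlur α H = wordBlur β G ↔ α = β ∧ H = G := by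
  refine ⟨fun h => ?_, fun ⟨hα, hH⟩ => hα ▸ hH ▸ rfl⟩
  obtain ⟨hβ, hG⟩ := eq_wordBlur_iff.1 h
  obtain ⟨hα, hH⟩ := eq_wordBlur_iff.1 h.symm
  obtain rfl : α = β :=
    (wordBlur_mem_Z_iff.1 hα).eq_of_length_le (wordBlur_mem_Z_iff.1 hβ).length_le
  exact ⟨rfl, Sum.inr_injective ((eq_wordBlur_iff.1 rfl).2.symm.trans hG)⟩

theorem ZH_eq_insert :
    ZH A V α H F = insert (wordBlur α H) (⋃ a ∈ H.1 \ F, Z A V (α ++ [a])) := by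
  ext z
  simp only [mem_insert_iff, mem_iUnion₂, eq_wordBlur_iff, mem_Z_append_singleton, exists_prop,
    and_left_comm (b := z ∈ Z A V α), exists_and_left, ← and_or_left]
  rfl

theorem embed_mem_ZH_iff :
    embed A V x ∈ ZH A V α H F ↔ ∃ a ∈ H.1 \ F, embed A V x ∈ Z A V (α ++ [a]) := by
  have hne : embed A V x ≠ wordBlur α H := fun h => Sum.inl_ne_inr (eq_wordBlur_iff.1 h).2
  simp only [ZH_eq_insert, mem_insert_iff, hne, false_or, mem_iUnion₂, exists_prop]

theorem ZH_anti (h : F ⊆ F') : ZH A V α H F' ⊆ ZH A V α H F :=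
  fun _ hz => ⟨hz.1, hz.2.imp_right fun ⟨a, ha, hza⟩ => ⟨a, sdiff_subset_sdiff_right h ha, hza⟩⟩

theorem inLang_iff_exists_embed_mem_Z {Y : Set (ℕ → A)} :
    InLang Y α ↔ ∃ y ∈ Y, embed A V y ∈ Z A V α := by
  simp only [InLang, embed_mem_Z_iff]

theorem InLang.of_isPrefix {Y : Set (ℕ → A)} (hα : InLang Y α) (h : β <+: α) : InLang Y β := by
  obtain ⟨y, hy, hyα⟩ := hα
  exact ⟨y, hy, fun i => (hyα (i.castLE h.length_le)).trans (h.getElem i.2).symm⟩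

theorem ZH_inter_image_embed_nonempty_iff {Y : Set (ℕ → A)} :
    (ZH A V α H F ∩ embed A V '' Y).Nonempty ↔ (Fol Y α ∩ (H.1 \ F)).Nonempty := by
  constructor
  · rintro ⟨_, hz, y, hy, rfl⟩
    obtain ⟨a, ha, hya⟩ := embed_mem_ZH_iff.1 hz
    exact ⟨a, inLang_iff_exists_embed_mem_Z.2 ⟨y, hy, hya⟩, ha⟩
  · rintro ⟨a, haY, ha⟩
    obtain ⟨y, hy, hya⟩ := inLang_iff_exists_embed_mem_Z.1 haY
    exact ⟨_, embed_mem_ZH_iff.2 ⟨a, ha, hya⟩, y, hy, rfl⟩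

theorem exists_eq_wordBlur_or_exists_mem_Z (z : FullBlur A V) (n : ℕ) :
    (∃ α H, z = wordBlur α H) ∨ ∃ α : List A, α.length = n ∧ z ∈ Z A V α := by
  induction n with
  | zero => exact Or.inr ⟨[], rfl, nofun⟩
  | succ n ih =>
    obtain h | ⟨α, rfl, hα⟩ := ih
    · exact Or.inl h
    · cases hz : z.1 α.length with
      | inl a => exact Or.inr ⟨α ++ [a], by simp, mem_Z_append_singleton.2 ⟨hα, hz⟩⟩
      | inr H => exact Or.inl ⟨α, H, eq_wordBlur_iff.2 ⟨hα, hz⟩⟩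

theorem exists_eq_embed_or_exists_eq_wordBlur (z : FullBlur A V) :
    (∃ x, z = embed A V x) ∨ ∃ α H, z = wordBlur α H := by
  refine or_iff_not_imp_right.2 fun h => ?_
  have hletter (n : ℕ) : ∃ a, z.1 n = Sum.inl a := by
    obtain ⟨α, hlen, hα⟩ := (exists_eq_wordBlur_or_exists_mem_Z z (n + 1)).resolve_left h
    exact ⟨_, mem_Z_iff.1 hα n (by lia)⟩
  choose x hx using hletter
  exact ⟨x, Subtype.ext (funext hx)⟩

end Words

section Topology

attribute [local instance] tau prodDiscrete

variable {A : Type*} {V : Set (Set A)} {Y : Set (ℕ → A)}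

theorem isOpen_Z (α : List A) : IsOpen (Z A V α) :=
  .basic _ (Or.inl ⟨α, rfl⟩)

theorem isOpen_ZH (α : List A) (H : {H : Set A // H ∈ V}) {F : Set A} (hF : F.Finite) :
    IsOpen (ZH A V α H F) := by
  have hinter : ZH A V α H F = ZH A V α H (H.1 ∩ F) := by
    simp only [ZH_eq_insert, sdiff_self_inter]
  rw [hinter]
  exact .basic _ (Or.inr ⟨α, H, H.1 ∩ F, inter_subset_left, hF.inter_of_right _, rfl⟩)

theorem continuous_embed : Continuous (embed A V) := by
  let _ : TopologicalSpace A := ⊥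
  have _ : DiscreteTopology A := ⟨rfl⟩
  have hZ (α : List A) : IsOpen (embed A V ⁻¹' Z A V α) := by
    have hpre : embed A V ⁻¹' Z A V α =
        ⋂ i : Fin α.length, (fun x : ℕ → A => x i) ⁻¹' {α.get i} := by
      ext x
      simp only [mem_preimage, embed_mem_Z_iff, mem_iInter, mem_singleton_iff]
    rw [hpre]
    exact isOpen_iInter_of_finite fun i => (isOpen_discrete _).preimage (continuous_apply _)
  refine continuous_generateFrom_iff.2 ?_
  rintro _ (⟨α, rfl⟩ | ⟨α, H, F, -, -, rfl⟩)
  · exact hZ α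
  · have hpre : embed A V ⁻¹' ZH A V α H F = ⋃ a ∈ H.1 \ F, embed A V ⁻¹' Z A V (α ++ [a]) := by
      ext x
      simp only [mem_preimage, embed_mem_ZH_iff, mem_iUnion₂, exists_prop]
    rw [hpre]
    exact isOpen_biUnion fun a _ => hZ _

theorem isInducing_embed : IsInducing (embed A V) := by
  let _ : TopologicalSpace A := ⊥
  have _ : DiscreteTopology A := ⟨rfl⟩
  refine ⟨le_antisymm continuous_embed.le_induced ?_⟩
  refine le_of_le_of_eq (le_generateFrom ?_)
    (PiNat.isTopologicalBasis_cylinders fun _ => A).eq_generateFrom.symm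
  rintro _ ⟨x, n, rfl⟩
  refine ⟨Z A V (List.ofFn fun i : Fin n => x i), isOpen_Z _, ?_⟩
  ext y
  simp [mem_Z_iff, embed, PiNat.cylinder]

theorem exists_ZH_subset_of_wordBlur_mem {α : List A} {H : {H : Set A // H ∈ V}}
    {U : Set (FullBlur A V)} (hU : U ∈ Cylinders A V) (hmem : wordBlur α H ∈ U) :
    ∃ F : Set A, F.Finite ∧ ZH A V α H F ⊆ U := by
  have hZH : ZH A V α H ∅ ⊆ Z A V α := fun _ hz => hz.1
  obtain ⟨β, rfl⟩ | ⟨β, G, F, -, hF, rfl⟩ := hU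
  · exact ⟨∅, finite_empty, hZH.trans (Z_subset_Z (wordBlur_mem_Z_iff.1 hmem))⟩
  · rw [ZH_eq_insert] at hmem
    obtain heq | hmem := hmem
    · obtain ⟨rfl, rfl⟩ := wordBlur_inj.1 heq
      exact ⟨F, hF, Subset.rfl⟩
    · obtain ⟨a, ha, hβ⟩ := mem_iUnion₂.1 hmem
      refine ⟨∅, finite_empty, hZH.trans ((Z_subset_Z (wordBlur_mem_Z_iff.1 hβ)).trans ?_)⟩
      rw [ZH_eq_insert]
      exact fun z hz => Or.inr (mem_biUnion ha hz)

theorem hasBasis_nhds_wordBlur (α : List A) (H : {H : Set A // H ∈ V}) :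
    (𝓝 (wordBlur α H)).HasBasis Set.Finite (ZH A V α H) := by
  have hnhds : 𝓝 (wordBlur α H) = ⨅ (F : Set A) (_ : F.Finite), 𝓟 (ZH A V α H F) := by
    refine le_antisymm (le_iInf₂ fun F hF => le_principal_iff.2 ?_) ?_
    · refine (isOpen_ZH α H hF).mem_nhds ?_
      rw [ZH_eq_insert]
      exact mem_insert _ _
    · refine (le_iInf₂ fun U hU => ?_).trans_eq TopologicalSpace.nhds_generateFrom.symm
      obtain ⟨F, hF, hFU⟩ := exists_ZH_subset_of_wordBlur_mem hU.2 hU.1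
      exact iInf₂_le_of_le F hF (principal_mono.2 hFU)
  rw [hnhds]
  exact hasBasis_biInf_principal' (fun F hF F' hF' => ⟨F ∪ F', hF.union hF',
    ZH_anti subset_union_left, ZH_anti subset_union_right⟩) ⟨∅, finite_empty⟩

theorem embed_mem_closure_image_iff {x : ℕ → A} :
    embed A V x ∈ closure (embed A V '' Y) ↔ x ∈ closure Y := by
  rw [isInducing_embed.closure_eq_preimage_closure_image, mem_preimage]

theorem wordBlur_mem_closure_image_iff {α : List A} {H : {H : Set A // H ∈ V}} :
    wordBlur α H ∈ closure (embed A V '' Y) ↔ (Fol Y α ∩ H.1).Infinite := by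
  rw [mem_closure_iff_nhds_basis' (hasBasis_nhds_wordBlur α H)]
  simp only [ZH_inter_image_embed_nonempty_iff, ← inter_sdiff_assoc]
  exact ⟨fun h hfin => (h _ hfin).ne_empty Set.sdiff_self, fun h F hF => (h.sdiff hF).nonempty⟩

theorem closure_image_embed :
    closure (embed A V '' Y) = embed A V '' closure Y ∪ boundary A V Y := by
  ext z
  constructor
  · intro hz
    obtain ⟨x, rfl⟩ | ⟨α, H, rfl⟩ := exists_eq_embed_or_exists_eq_wordBlur z
    · exact Or.inl ⟨x, embed_mem_closure_image_iff.1 hz, rfl⟩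
    · have hinf := wordBlur_mem_closure_image_iff.1 hz
      obtain ⟨a, ha, -⟩ := hinf.nonempty
      exact Or.inr ⟨α, H, rfl, InLang.of_isPrefix ha (List.prefix_append α [a]), hinf⟩
  · rintro (⟨x, hx, rfl⟩ | ⟨α, H, rfl, -, hinf⟩)
    · exact embed_mem_closure_image_iff.2 hx
    · exact wordBlur_mem_closure_image_iff.2 hinf

theorem sigmaOf_eq_closure_image_embed (hY : IsClosed Y) :
    SigmaOf A V Y = closure (embed A V '' Y) := by
  rw [closure_image_embed, hY.closure_eq, SigmaOf]

end Topology

theorem blurShift_iff_closure_general {A : Type*} (V : Set (Set A)) (Λ' : Set (FullBlur A V)) :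
    (∃ Λ : Set (ℕ → A), IsShiftSpace Λ ∧ Λ' = SigmaOf A V Λ) ↔
      (∃ Λ : Set (ℕ → A), IsShiftSpace Λ ∧
        Λ' = @closure _ (tau A V) (embed A V '' Λ)) :=
  exists_congr fun _ => and_congr_right fun hΛ => by rw [sigmaOf_eq_closure_image_embed hΛ.1]

/-- `Λ' ⊆ Σ` is a blur shift space with resolution `V` if and only
if it is the closure, in the topology generated by the generalized cylinders, of some
shift space `Λ ⊆ A^ℕ`. -/
theorem blurShift_iff_closure {A : Type*} (V : Set (Set A)) (hV : IsBlurFamily V)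
    (Λ' : Set (FullBlur A V)) :
    (∃ Λ : Set (ℕ → A), IsShiftSpace Λ ∧ Λ' = SigmaOf A V Λ) ↔
      (∃ Λ : Set (ℕ → A), IsShiftSpace Λ ∧
        Λ' = @closure _ (tau A V) (embed A V '' Λ)) :=
  blurShift_iff_closure_general V Λ'

end BlurPaper
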